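/- A reflexive digraph H has a min ordering if and only if it contains no invertible pairs. -/

import Mathlib

/-- A digraph on vertex type `V` is given by its edge relation `E : V → V → Prop`
(loops allowed).  The min-ordering property for a strict linear order `r`:
for any edges `(u,v)` and `(u',v')` with `r u u'` and `r v' v`, `(u,v')` is also an edge. -/
def MinOrderProp {V : Type*} (E r : V → V → Prop) : Prop :=
  ∀ u v u' v' : V, E u v → E u' v' → r u u' → r v' v → E u v'

/-- The edge relation of the pair digraph `H⁺` of a digraph with edge relation `E`:
for all vertices `u, u', v, v'`, there are edges `(u,u') → (v,v')` and `(v',v) → (u',u)`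
whenever `E u v`, `E u' v'`, `¬ E u v'`, and the endpoints have distinct coordinates. -/
def pairEdge {V : Type*} (E : V → V → Prop) (p q : V × V) : Prop :=
  ∃ u u' v v' : V, u ≠ u' ∧ v ≠ v' ∧ E u v ∧ E u' v' ∧ ¬ E u v' ∧
    ((p = (u, u') ∧ q = (v, v')) ∨ (p = (v', v) ∧ q = (u', u)))

/-- The edge relation of the implication graph `H*` of a reflexive digraph with edge
relation `E`: for any three distinct vertices `u, v, w`, there are edges
`(u,v) → (w,v)` and `(v,w) → (v,u)` iff `[E u w ∧ ¬ E u v]` or `[E w u ∧ ¬ E v u]`. -/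
def implEdge {V : Type*} (E : V → V → Prop) (p q : V × V) : Prop :=
  ∃ u v w : V, u ≠ v ∧ v ≠ w ∧ u ≠ w ∧
    ((E u w ∧ ¬ E u v) ∨ (E w u ∧ ¬ E v u)) ∧
    ((p = (u, v) ∧ q = (w, v)) ∨ (p = (v, w) ∧ q = (v, u)))

/-- A tournament on `V`: for each pair of distinct vertices exactly one of the two
directed edges is present, and there are no loops. -/
def IsTournamentRel {V : Type*} (T : V → V → Prop) : Prop :=
  (∀ u, ¬ T u u) ∧ ∀ u v : V, u ≠ v → (T u v ↔ ¬ T v u)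

/-- A tournament (orientation of the complete graph) `T` is consistent with the digraph `E`
if for every vertex `(u,v)` of the implication graph and every vertex `(u',v')` reachable
from `(u,v)` by a directed walk in the implication graph, `u → v` in `T` implies
`u' → v'` in `T`. -/
def ConsistentWith {V : Type*} (E T : V → V → Prop) : Prop :=
  ∀ u v u' v' : V, u ≠ v → u' ≠ v' →
    Relation.ReflTransGen (implEdge E) (u, v) (u', v') → T u v → T u' v'

/-- `u, v` form an invertible pair of the digraph `E`: they are distinct and `(u,v)` and
`(v,u)` lie in the same strong component of the pair digraph. -/
def InvertiblePair {V : Type*} (E : V → V → Prop) (u v : V) : Prop :=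
  u ≠ v ∧ Relation.ReflTransGen (pairEdge E) (u, v) (v, u) ∧
    Relation.ReflTransGen (pairEdge E) (v, u) (u, v)

/-- The tournament obtained from `T` by reversing the direction of all edges `(x, y)` of `T`
with `u → x`, `x → y`, `y → u` in `T` (the set `E_u`). -/
def revTri {V : Type*} (T : V → V → Prop) (u : V) (x y : V) : Prop :=
  (T x y ∧ ¬ (T u x ∧ T x y ∧ T y u)) ∨ (T y x ∧ T u y ∧ T x u)

def LocCons {V : Type*} (E T : V → V → Prop) : Prop :=
  ∀ u v w : V, T u v → T v w → (E u w → E u v) ∧ (E w u → E v u)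

def TriFree {V : Type*} (T : V → V → Prop) (z : V) : Prop :=
  ∀ x y : V, T z x → T x y → ¬ T y z

theorem revTri_tour {V : Type*} (T : V → V → Prop) (z : V)
    (hT : IsTournamentRel T) : IsTournamentRel (revTri T z) := by
  obtain ⟨h1, h2⟩ := hT
  refine ⟨fun u => ?_, fun u v huv => ?_⟩
  · unfold revTri
    have := h1 u
    tauto
  · unfold revTri
    have a := h2 u v huv
    by_cases hu : u = z
    · subst hu; have := h1 u; tauto
    · by_cases hv : v = z
      · subst hv; have := h1 v; tauto
      · have b := h2 u z hu
        have c := h2 v z hv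
        tauto

theorem revTri_triFree_self {V : Type*} (T : V → V → Prop) (z : V)
    (hT : IsTournamentRel T) : TriFree (revTri T z) z := by
  obtain ⟨h1, h2⟩ := hT
  intro x y
  unfold revTri
  have := h1 z
  have := h1 x
  have := h1 y
  grind

theorem revTri_triFree {V : Type*} (T : V → V → Prop) (z w : V)
    (hT : IsTournamentRel T) (hw : TriFree T w) : TriFree (revTri T z) w := by
  obtain ⟨h1, h2⟩ := hT
  by_cases hzw : z = w
  · subst hzw; exact revTri_triFree_self T z ⟨h1, h2⟩
  have key : ∀ x y, T w x → T y w → T y x := by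
    intro x y hx hy
    by_contra hc
    have hne : y ≠ x := by
      rintro rfl
      by_cases hyw : y = w
      · subst hyw; exact h1 _ hx
      · exact (h2 y w hyw).1 hy hx
    exact hw x y hx ((h2 x y hne.symm).2 hc) hy
  have asym : ∀ x y, T x y → ¬ T y x := by
    intro x y hx
    by_cases h : x = y
    · subst h; exact absurd hx (h1 x)
    · exact (h2 x y h).1 hx
  have htot := h2 z w hzw
  -- edges incident with w are not changed
  have e1 : ∀ x, revTri T z w x → T w x := by
    rintro x (⟨h, -⟩ | ⟨a, b, c⟩)
    · exact h
    · exact absurd c (asym _ _ (key z x (by grind) a) |> fun h => by grind)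
  have e2 : ∀ x, revTri T z x w → T x w := by
    rintro x (⟨h, -⟩ | ⟨a, b, c⟩)
    · exact h
    · exact absurd (key x z a b) (asym _ _ c)
  intro x y hx hxy hy
  have hx := e1 _ hx
  have hy := e2 _ hy
  have hyx := key x y hx hy
  rcases hxy with ⟨h, -⟩ | ⟨a, b, c⟩
  · exact asym _ _ h hyx
  · rcases Classical.em (T z w) with h | h
    · exact asym _ _ c (key x z hx h)
    · have : T w z := by grind
      exact asym _ _ b (key z y this hy)

theorem revTri_locCons {V : Type*} (E T : V → V → Prop) (z : V)
    (hT : IsTournamentRel T) (hc : LocCons E T) : LocCons E (revTri T z) := by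
  obtain ⟨h1, h2⟩ := hT
  have asym : ∀ x y, T x y → ¬ T y x := by
    intro x y hx
    by_cases h : x = y
    · subst h; exact absurd hx (h1 x)
    · exact (h2 x y h).1 hx
  intro a b c hab hbc
  rcases hab with ⟨ab, nab⟩ | ⟨ba, zb, az⟩
  · rcases hbc with ⟨bc, nbc⟩ | ⟨cb, zc, bz⟩
    · exact hc a b c ab bc
    · have hza : a ≠ z := by
        rintro rfl; exact asym _ _ ab bz
      have az : T a z := by
        have := h2 a z hza
        grind
      have := hc a z c az zc
      have := hc a b z ab bz
      tauto
  · rcases hbc with ⟨bc, nbc⟩ | ⟨cb, zc, bz⟩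
    · have hzc : z ≠ c := by
        rintro rfl; exact asym _ _ zb bc
      have zc : T z c := by
        have := h2 z c hzc
        grind
      have := hc a z c az zc
      have := hc z b a zb ba
      have := hc b a z ba az
      have := hc a z b az zb
      tauto
    · exact absurd bz (asym _ _ zb)

theorem exists_tour {V : Type*} [Fintype V] (E : V → V → Prop)
    (hinv : ¬ ∃ u v : V, InvertiblePair E u v) :
    ∃ T : V → V → Prop, IsTournamentRel T ∧
      ∀ p q : V × V, pairEdge E p q → T p.1 p.2 → T q.1 q.2 := by
  classical
  have skew1 : ∀ p q : V × V, pairEdge E p q → pairEdge E q.swap p.swap := by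
    rintro p q ⟨u, u', v, v', a, b, c, d, e, ⟨rfl, rfl⟩ | ⟨rfl, rfl⟩⟩
    · exact ⟨u, u', v, v', a, b, c, d, e, Or.inr ⟨rfl, rfl⟩⟩
    · exact ⟨u, u', v, v', a, b, c, d, e, Or.inl ⟨rfl, rfl⟩⟩
  have skew : ∀ p q : V × V, Relation.ReflTransGen (pairEdge E) p q →
      Relation.ReflTransGen (pairEdge E) q.swap p.swap := by
    intro p q h
    induction h with
    | refl => exact .refl
    | tail _ h ih => exact .head (skew1 _ _ h) ih
  let P : Set (V × V) → Prop := fun S =>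
    (∀ p q, pairEdge E p q → p ∈ S → q ∈ S) ∧ ∀ p ∈ S, p.swap ∉ S
  obtain ⟨S, hS⟩ := (Set.toFinite {S | P S}).exists_maximal ⟨∅, by simp [P]⟩
  obtain ⟨⟨hcl, has⟩, hmax⟩ := hS
  have hclR : ∀ p q, Relation.ReflTransGen (pairEdge E) p q → p ∈ S → q ∈ S := by
    intro p q h hp
    induction h with
    | refl => exact hp
    | tail _ h ih => exact hcl _ _ h ih
  have ext : ∀ p : V × V, p.swap ∉ S →
      ¬ Relation.ReflTransGen (pairEdge E) p p.swap → p ∈ S := by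
    intro p hp hr
    have hP : P (S ∪ {q | Relation.ReflTransGen (pairEdge E) p q}) := by
      refine ⟨?_, ?_⟩
      · rintro a b hab (h | h)
        · exact Or.inl (hcl _ _ hab h)
        · exact Or.inr (Relation.ReflTransGen.tail h hab)
      · rintro a (h | h) (h' | h')
        · exact has a h h'
        · have := skew _ _ h'
          rw [Prod.swap_swap] at this
          exact hp (hclR _ _ this h)
        · exact hp (hclR _ _ (skew _ _ h) h')
        · have := skew _ _ h'
          rw [Prod.swap_swap] at this
          exact hr (Relation.ReflTransGen.trans h this)
    exact hmax hP Set.subset_union_left (Or.inr Relation.ReflTransGen.refl)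
  refine ⟨fun x y => (x, y) ∈ S, ⟨fun u h => has _ h h, fun u v huv => ⟨fun h => has _ h, ?_⟩⟩,
    fun p q h => hcl p q h⟩
  intro h
  by_contra hc
  have a := mt (ext (u, v) h) hc
  have b := mt (ext (v, u) hc) h
  exact hinv ⟨u, v, huv, not_not.1 a, not_not.1 b⟩

/-- A reflexive digraph `H` has a min ordering iff it contains no
invertible pairs. -/
theorem stmt_15 {V : Type*} [Fintype V] (E : V → V → Prop) (hrefl : ∀ v, E v v) :
    (∃ r : V → V → Prop, IsStrictTotalOrder V r ∧ MinOrderProp E r) ↔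
      ¬ ∃ u v : V, InvertiblePair E u v := by
  classical
  constructor
  · rintro ⟨r, hr, hm⟩ ⟨u, v, huv, h1, h2⟩
    have step : ∀ p q, pairEdge E p q → r p.1 p.2 → r q.1 q.2 := by
      rintro p q ⟨u, u', v, v', a, b, c, d, e, ⟨rfl, rfl⟩ | ⟨rfl, rfl⟩⟩ h
      · rcases trichotomous_of r v v' with h' | h' | h'
        · exact h'
        · exact absurd h' b
        · exact absurd (hm _ _ _ _ c d h h') e
      · rcases trichotomous_of r u' u with h' | h' | h'
        · exact h'
        · exact absurd h'.symm a
        · exact absurd (hm _ _ _ _ c d h' h) e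
    have steps : ∀ p q, Relation.ReflTransGen (pairEdge E) p q → r p.1 p.2 → r q.1 q.2 := by
      intro p q h hp
      induction h with
      | refl => exact hp
      | tail _ h ih => exact step _ _ h ih
    rcases trichotomous_of r u v with h' | h' | h'
    · exact asymm_of r h' (steps _ _ h1 h')
    · exact huv h'
    · exact asymm_of r h' (steps _ _ h2 h')
  · intro hinv
    obtain ⟨T, hT, hcl⟩ := exists_tour E hinv
    have asym : ∀ T : V → V → Prop, IsTournamentRel T → ∀ x y, T x y → ¬ T y x := by
      intro T hT x y hx
      by_cases h : x = y
      · subst h; exact absurd hx (hT.1 x)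
      · exact (hT.2 x y h).1 hx
    have hloc : LocCons E T := by
      intro u v w huv hvw
      have n1 : u ≠ v := by rintro rfl; exact hT.1 _ huv
      have n2 : v ≠ w := by rintro rfl; exact hT.1 _ hvw
      refine ⟨fun h => ?_, fun h => ?_⟩
      · by_contra hc
        exact asym T hT _ _ hvw (hcl (u, v) (w, v)
          ⟨u, v, w, v, n1, n2.symm, h, hrefl v, hc, Or.inl ⟨rfl, rfl⟩⟩ huv)
      · by_contra hc
        exact asym T hT _ _ huv (hcl (v, w) (v, u)
          ⟨v, w, v, u, n2, n1.symm, hrefl v, h, hc, Or.inl ⟨rfl, rfl⟩⟩ hvw)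
    have main : ∀ s : Finset V, ∃ T : V → V → Prop, IsTournamentRel T ∧ LocCons E T ∧
        ∀ z ∈ s, TriFree T z := by
      intro s
      induction s using Finset.induction_on with
      | empty => exact ⟨T, hT, hloc, by simp⟩
      | insert z s _ ih =>
        obtain ⟨T, hT, hl, hs⟩ := ih
        refine ⟨revTri T z, revTri_tour T z hT, revTri_locCons E T z hT hl, ?_⟩
        intro w hw
        rcases Finset.mem_insert.1 hw with rfl | hw
        · exact revTri_triFree_self T w hT
        · exact revTri_triFree T z w hT (hs w hw)
    obtain ⟨R, hR, hl, hs⟩ := main Finset.univ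
    have has := asym R hR
    have tri : ∀ a b, a ≠ b → ¬ R a b → R b a := fun a b hab h =>
      (hR.2 b a hab.symm).2 h
    refine ⟨R, { trichotomous := ?_, irrefl := hR.1, trans := ?_ }, ?_⟩
    · intro a b h1 h2
      by_contra hc
      exact h2 (tri a b hc h1)
    · intro a b c hab hbc
      by_contra hc
      have hne : a ≠ c := by rintro rfl; exact has _ _ hab hbc
      exact hs a (Finset.mem_univ a) b c hab hbc (tri a c hne hc)
    · intro u v u' v' h1 h2 h3 h4
      by_cases huv : u = v'
      · subst huv; exact hrefl u
      by_cases h : R u v'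
      · exact (hl u v' v h h4).1 h1
      · exact (hl v' u u' (tri _ _ huv h) h3).2 h2
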